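/- The permutation σ₁ has order 2n, the permutation σ₂ has order 2m, the product σ₁σ₂ has order 2, and the subgroup G = ⟨σ₁, σ₂⟩ of the automorphism group of Γ has order 4m²n. -/

import Mathlib

/-- The lexicographic product `C_n[mK_1]`: vertices `(i,j)` with `(i₁,j₁) ~ (i₂,j₂)`
iff `i₂ = i₁ + 1` or `i₁ = i₂ + 1` (indices modulo `n`). -/
def lexCycle (n m : ℕ) : SimpleGraph (ZMod n × ZMod m) :=
  SimpleGraph.fromRel (fun u v => v.1 = u.1 + 1)

/-- The representative in `{1, …, n}` of `i` modulo `n`. -/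
def zrep {n : ℕ} (i : ZMod n) : ℕ := if i.val = 0 then n else i.val

/-!
Conjugating by a signed change of coordinates in each block, centred at the fixed point `1/2` of
`j ↦ 1 - j`, turns `σ₁` into `A : (i, x) ↦ (i + 1, ε i x)` and `σ₂` into
`(i, x) ↦ (2 - i, 1 + ε i x)`, where `ε i = (-1)^i`. The latter is `t * R`, with
`R : (i, x) ↦ (2 - i, ε i x)` and `t` the translation of every block by `1`. The translations
`x ↦ x + u + ε i v` form a group `N` of order `m²` normalized by `A` and `R`. As `A` has order `2n`
and is inverted by the involution `R`, the group `⟨A, R⟩` is dihedral of order `4n`; it meets `N`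
trivially because it preserves the zero section `x = 0`. Finally `⟨A, t * R⟩` contains `(t * R)²`,
the translation with `u = v = 1`, whose conjugates under powers of `A` generate `N` because `m` is
odd; so it is all of `N ⋊ ⟨A, R⟩`, of order `m² · 4n`.
-/

open Equiv (Perm)

theorem card_sup_eq_mul_of_disjoint {G : Type*} [Group G] {N H : Subgroup G}
    (hH : H ≤ Subgroup.normalizer (N : Set G)) (hNH : Disjoint N H) :
    Nat.card (N ⊔ H : Subgroup G) = Nat.card N * Nat.card H := by
  have := Subgroup.normal_subgroupOf_of_le_normalizer hH
  have := Subgroup.normal_subgroupOf_sup_of_le_normalizer hH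
  have hrel : N.relIndex (N ⊔ H) = Nat.card H := calc
    N.relIndex (N ⊔ H) = N.relIndex H := by
      rw [sup_comm]
      exact Nat.card_congr
        (QuotientGroup.quotientInfEquivProdNormalizerQuotient H N hH).toEquiv.symm
    _ = Nat.card H := by
      rw [← Subgroup.inf_relIndex_right, hNH.eq_bot, Subgroup.relIndex_bot_left]
  rw [← Subgroup.relIndex_bot_left, ← Subgroup.relIndex_mul_relIndex ⊥ N _ bot_le le_sup_left,
    Subgroup.relIndex_bot_left, hrel]

theorem mem_normalizer_range {P G : Type*} [Group P] [Group G] {f : P →* G} {g : G} (α : P ≃ P)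
    (hg : ∀ x, g * f x = f (α x) * g) : g ∈ Subgroup.normalizer (f.range : Set G) := by
  have hconj : ∀ x, MulAut.conj g (f x) = f (α x) := fun x => by
    rw [MulAut.conj_apply, hg, mul_inv_cancel_right]
  rw [Subgroup.mem_normalizer_iff_map_conj_eq]
  ext h
  constructor
  · rintro ⟨_, ⟨x, rfl⟩, rfl⟩
    exact ⟨α x, (hconj x).symm⟩
  · rintro ⟨x, rfl⟩
    exact ⟨f (α.symm x), ⟨α.symm x, rfl⟩, (hconj _).trans (by rw [α.apply_symm_apply])⟩

theorem card_zpowers_sup_zpowers_of_inverts {G : Type*} [Group G] {a r : G} (hr : orderOf r = 2)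
    (hra : r * a * r⁻¹ = a⁻¹) (ha : a ^ 2 ≠ 1) :
    Nat.card (Subgroup.zpowers a ⊔ Subgroup.zpowers r : Subgroup G) = 2 * orderOf a := by
  have hnorm : Subgroup.zpowers r ≤ Subgroup.normalizer (Subgroup.zpowers a : Set G) := by
    rw [Subgroup.zpowers_le, Subgroup.mem_normalizer_iff_map_conj_eq, MonoidHom.map_zpowers]
    change Subgroup.zpowers (r * a * r⁻¹) = _
    rw [hra, Subgroup.zpowers_inv]
  have hr_notMem : r ∉ Subgroup.zpowers a := fun hmem => by
    obtain ⟨k, rfl : a ^ k = r⟩ := hmem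
    have hinv : a = a⁻¹ := by
      rwa [((Commute.refl a).zpow_left k).eq, mul_inv_cancel_right] at hra
    exact ha (by rw [pow_two, ← eq_inv_iff_mul_eq_one, ← hinv])
  have hdisj : Disjoint (Subgroup.zpowers a) (Subgroup.zpowers r) := by
    rw [Subgroup.disjoint_def]
    rintro x hxa ⟨k, rfl : r ^ k = x⟩
    have hr2 : r ^ (2 : ℤ) = 1 := by exact_mod_cast hr ▸ pow_orderOf_eq_one r
    rcases Int.even_or_odd' k with ⟨c, rfl | rfl⟩
    · rw [zpow_mul, hr2, one_zpow]
    · rw [zpow_add_one, zpow_mul, hr2, one_zpow, one_mul] at hxa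
      exact absurd hxa hr_notMem
  rw [card_sup_eq_mul_of_disjoint hnorm hdisj, Nat.card_zpowers, Nat.card_zpowers, hr, mul_comm]

theorem card_closure_pair_map {G H : Type*} [Group G] [Group H] (e : G ≃* H) (a b : G) :
    Nat.card (Subgroup.closure {e a, e b}) = Nat.card (Subgroup.closure {a, b}) := by
  have hmap : Subgroup.closure {e a, e b} = (Subgroup.closure {a, b}).map e.toMonoidHom := by
    simp [MonoidHom.map_closure, Set.image_pair]
  rw [hmap, Subgroup.card_map_of_injective (f := e.toMonoidHom) e.injective]

theorem orderOf_dvd_orderOf_of_semiconj {α β : Type*} {f : Perm α} {g : Perm β} {π : α → β}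
    (hπ : Function.Surjective π) (h : Function.Semiconj π f g) : orderOf g ∣ orderOf f := by
  refine orderOf_dvd_of_pow_eq_one (Equiv.ext fun b => ?_)
  obtain ⟨a, rfl⟩ := hπ b
  have hiter := h.iterate_right (orderOf f) a
  rw [← Equiv.Perm.coe_pow, ← Equiv.Perm.coe_pow, pow_orderOf_eq_one] at hiter
  exact hiter.symm

theorem orderOf_addRight {A : Type*} [AddGroup A] (a : A) :
    orderOf (Equiv.addRight a) = addOrderOf a := by
  refine Nat.dvd_right_iff_eq.mp fun k => ?_
  rw [orderOf_dvd_iff_pow_eq_one, addOrderOf_dvd_iff_nsmul_eq_zero, Equiv.nsmul_addRight]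
  exact ⟨fun h => by simpa using Equiv.congr_fun h 0, fun h => by rw [h, Equiv.addRight_zero]⟩

theorem orderOf_subLeft {A : Type*} [AddCommGroup A] (a : A) {b : A} (hb : b + b ≠ 0) :
    orderOf (Equiv.subLeft a) = 2 := by
  refine orderOf_eq_prime (Equiv.ext fun x => sub_sub_cancel a x) fun h => hb ?_
  have h0 : a - 0 = 0 := Equiv.congr_fun h 0
  have hb' : a - b = b := Equiv.congr_fun h b
  rw [← sub_eq_iff_eq_add.mp hb', ← h0, sub_zero]

theorem neg_one_pow_succ_div_two {R : Type*} [Monoid R] [HasDistribNeg R] (r : ℕ) :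
    (-1 : R) ^ ((r + 1) / 2) = (-1) ^ r * (-1) ^ (r / 2) := by
  obtain ⟨k, rfl | rfl⟩ := r.even_or_odd'
  · rw [(even_two_mul k).neg_one_pow, one_mul]
    congr 1
    omega
  · rw [(odd_two_mul_add_one k).neg_one_pow, ← pow_succ']
    congr 1
    omega

theorem zmultiples_one_eq_top (m : ℕ) : AddSubgroup.zmultiples (1 : ZMod m) = ⊤ := by
  refine (AddSubgroup.eq_top_iff' _).mpr fun x => AddSubgroup.mem_zmultiples_iff.mpr ⟨x.cast, ?_⟩
  rw [zsmul_one, ZMod.intCast_zmod_cast]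

theorem two_mul_inv_two {m : ℕ} (hm : Odd m) : (2 : ZMod m) * 2⁻¹ = 1 :=
  ZMod.coe_mul_inv_eq_one 2 (Nat.coprime_two_left.mpr hm)

section Zrep

variable {n : ℕ}

theorem zrep_zero : zrep (0 : ZMod n) = n := by
  simp [zrep]

variable [NeZero n] {i : ZMod n}

theorem zrep_pos (i : ZMod n) : 0 < zrep i := by
  unfold zrep
  split_ifs with h
  · exact NeZero.pos n
  · exact Nat.pos_of_ne_zero h

theorem zrep_le (i : ZMod n) : zrep i ≤ n := by
  unfold zrep
  split_ifs
  · exact le_rfl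
  · exact i.val_lt.le

theorem natCast_zrep (i : ZMod n) : (zrep i : ZMod n) = i := by
  unfold zrep
  split_ifs with h
  · rw [ZMod.natCast_self, (ZMod.val_eq_zero i).mp h]
  · exact ZMod.natCast_zmod_val i

theorem zrep_natCast {r : ℕ} (hr : 0 < r) (hrn : r ≤ n) : zrep (r : ZMod n) = r := by
  unfold zrep
  rw [ZMod.val_natCast]
  rcases hrn.lt_or_eq with h | rfl
  · rw [Nat.mod_eq_of_lt h, if_neg hr.ne']
  · rw [Nat.mod_self, if_pos rfl]

theorem zrep_one : zrep (1 : ZMod n) = 1 := by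
  simpa using zrep_natCast (n := n) one_pos NeZero.one_le

theorem zrep_add_one (hi : i ≠ 0) : zrep (i + 1) = zrep i + 1 := by
  have hne : zrep i ≠ n := fun h => hi (by rw [← natCast_zrep i, h, ZMod.natCast_self])
  have := zrep_le i
  simpa [natCast_zrep] using zrep_natCast (n := n) (r := zrep i + 1) (by omega) (by omega)

theorem zrep_two_sub_add_zrep (hi : i ≠ 1) : zrep (2 - i) + zrep i = n + 2 := by
  have hne : zrep i ≠ 1 := fun h => hi (by rw [← natCast_zrep i, h, Nat.cast_one])
  have hpos := zrep_pos i
  have hle := zrep_le i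
  have hcast : ((n + 2 - zrep i : ℕ) : ZMod n) = 2 - i := by
    rw [Nat.cast_sub (by omega)]
    simp [natCast_zrep]
  rw [← hcast, zrep_natCast (by omega) (by omega)]
  omega

end Zrep

/-- The sign `(-1)^i` of the block with index `i`. It does not depend on the representative of `i`
when `n` is even, which is the only case of interest. -/
def blockSign {n : ℕ} (i : ZMod n) : ℤˣ := (-1) ^ zrep i

theorem blockSign_zero {n : ℕ} (hn : Even n) : blockSign (0 : ZMod n) = 1 := by
  rw [blockSign, zrep_zero, hn.neg_one_pow]

section BlockSign

variable {n : ℕ} [NeZero n]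

theorem blockSign_one : blockSign (1 : ZMod n) = -1 := by
  rw [blockSign, zrep_one, pow_one]

theorem blockSign_add_one (hn : Even n) (i : ZMod n) : blockSign (i + 1) = -blockSign i := by
  obtain rfl | hi := eq_or_ne i 0
  · rw [zero_add, blockSign_one, blockSign_zero hn]
  · rw [blockSign, zrep_add_one hi, pow_succ, mul_neg_one, blockSign]

theorem blockSign_two_sub (hn : Even n) (i : ZMod n) : blockSign (2 - i) = blockSign i := by
  obtain rfl | hi := eq_or_ne i 1
  · norm_num
  · have hmul : blockSign (2 - i) * blockSign i = 1 := by
      rw [blockSign, blockSign, ← pow_add, zrep_two_sub_add_zrep hi, (hn.add even_two).neg_one_pow]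
    rw [mul_eq_one_iff_eq_inv.mp hmul, Int.units_inv_eq_self]

end BlockSign

section Model

variable (n : ℕ) (M : Type*) [AddCommGroup M]

/-- The model of `σ₁` in signed coordinates: the linear map sending each block to the next one. -/
def blockRotation : Perm (ZMod n × M) :=
  Equiv.prodShear (Equiv.addRight 1) fun i => MulAction.toPerm (blockSign i)

/-- The linear part of the model of `σ₂` in signed coordinates: a reflection of the cycle of blocks
fixing the block `1`. -/
def blockReflection : Perm (ZMod n × M) :=
  Equiv.prodShear (Equiv.subLeft 2) fun i => MulAction.toPerm (blockSign i)

/-- The group of translations acting on the blocks of even index by `u + v` and on those of odd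
index by `u - v`, parametrized by the pairs `(u, v)`. -/
def blockTranslation : Multiplicative (M × M) →* Perm (ZMod n × M) where
  toFun w := Equiv.prodShear (Equiv.refl _) fun i =>
    Equiv.addRight (w.toAdd.1 + blockSign i • w.toAdd.2)
  map_one' := by ext <;> simp [Equiv.prodShear]
  map_mul' w w' := by
    ext ⟨i, x⟩
    · rfl
    · change x + (w.toAdd.1 + w'.toAdd.1 + blockSign i • (w.toAdd.2 + w'.toAdd.2)) =
        x + (w'.toAdd.1 + blockSign i • w'.toAdd.2) + (w.toAdd.1 + blockSign i • w.toAdd.2)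
      rw [smul_add]
      abel

variable {M} in
/-- The model of `σ₂` in signed coordinates (for `b = 1`): the block reflection followed by the
translation of every block by `b`. -/
def blockGlide (b : M) : Perm (ZMod n × M) :=
  blockTranslation n M (.ofAdd (b, 0)) * blockReflection n M

variable {n M}

theorem blockRotation_apply (i : ZMod n) (x : M) :
    blockRotation n M (i, x) = (i + 1, blockSign i • x) := rfl

theorem blockReflection_apply (i : ZMod n) (x : M) :
    blockReflection n M (i, x) = (2 - i, blockSign i • x) := rfl

theorem blockTranslation_apply (u v : M) (i : ZMod n) (x : M) :
    blockTranslation n M (.ofAdd (u, v)) (i, x) = (i, x + (u + blockSign i • v)) := rfl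

theorem blockGlide_apply (b : M) (i : ZMod n) (x : M) :
    blockGlide n b (i, x) = (2 - i, b + blockSign i • x) := by
  simp [blockGlide, blockReflection_apply, blockTranslation_apply, add_comm]

section Relations

variable [NeZero n]

theorem blockRotation_mul_blockTranslation (hn : Even n) (u v : M) :
    blockRotation n M * blockTranslation n M (.ofAdd (u, v)) =
      blockTranslation n M (.ofAdd (v, -u)) * blockRotation n M := by
  ext ⟨i, x⟩
  · rfl
  · simp [blockRotation_apply, blockTranslation_apply, blockSign_add_one hn, smul_smul, add_comm]

theorem blockReflection_mul_blockTranslation (hn : Even n) (u v : M) :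
    blockReflection n M * blockTranslation n M (.ofAdd (u, v)) =
      blockTranslation n M (.ofAdd (v, u)) * blockReflection n M := by
  ext ⟨i, x⟩
  · rfl
  · simp [blockReflection_apply, blockTranslation_apply, blockSign_two_sub hn, smul_smul, add_comm]

theorem blockReflection_mul_self (hn : Even n) :
    blockReflection n M * blockReflection n M = 1 := by
  ext ⟨i, x⟩ <;> simp [blockReflection_apply, blockSign_two_sub hn, smul_smul]

theorem blockReflection_conj_blockRotation (hn : Even n) :
    blockReflection n M * blockRotation n M * (blockReflection n M)⁻¹ = (blockRotation n M)⁻¹ := by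
  rw [mul_inv_eq_iff_eq_mul, eq_inv_mul_iff_mul_eq]
  ext ⟨i, x⟩
  · exact show (2 - (i + 1) + 1 : ZMod n) = 2 - i by ring
  · simp [blockRotation_apply, blockReflection_apply, blockSign_add_one hn,
      blockSign_two_sub hn, smul_smul]

theorem blockGlide_sq (hn : Even n) (b : M) :
    blockGlide n b ^ 2 = blockTranslation n M (.ofAdd (b, b)) := calc
  blockGlide n b ^ 2 = blockTranslation n M (.ofAdd (b, 0)) *
      (blockReflection n M * blockTranslation n M (.ofAdd (b, 0))) * blockReflection n M := by
    simp only [blockGlide, pow_two, mul_assoc]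
  _ = blockTranslation n M (.ofAdd (b, 0)) * blockTranslation n M (.ofAdd (0, b)) := by
    rw [blockReflection_mul_blockTranslation hn, mul_assoc, mul_assoc,
      blockReflection_mul_self hn, mul_one]
  _ = blockTranslation n M (.ofAdd (b, b)) := by
    rw [← map_mul, ← ofAdd_add, Prod.mk_add_mk, add_zero, zero_add]

theorem blockRotation_sq_apply (hn : Even n) (i : ZMod n) (x : M) :
    (blockRotation n M ^ 2) (i, x) = (i + 2, -x) := by
  simp [pow_two, blockRotation_apply, blockSign_add_one hn, smul_smul, add_assoc,
    one_add_one_eq_two]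

theorem blockRotation_pow_two_mul_apply (hn : Even n) (k : ℕ) (i : ZMod n) (x : M) :
    (blockRotation n M ^ (2 * k)) (i, x) = (i + (2 * k : ℕ), (-1 : ℤˣ) ^ k • x) := by
  induction k with
  | zero => simp
  | succ k ih =>
    rw [mul_add_one, add_comm, pow_add, Equiv.Perm.mul_apply, ih, blockRotation_sq_apply hn]
    simp [pow_succ, add_left_comm, add_comm]

end Relations

theorem blockRotation_pow_self_apply (hn : n % 4 = 2) (i : ZMod n) (x : M) :
    (blockRotation n M ^ n) (i, x) = (i, -x) := by
  have : NeZero n := ⟨by omega⟩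
  have hodd : Odd (n / 2) := Nat.odd_iff.mpr (by omega)
  have heven : 2 * (n / 2) = n := by omega
  have h := blockRotation_pow_two_mul_apply (M := M) (heven ▸ even_two_mul _) (n / 2) i x
  rw [heven, hodd.neg_one_pow, ZMod.natCast_self, add_zero] at h
  simpa using h

theorem orderOf_blockRotation (hn : n % 4 = 2) {x : M} (hx : x + x ≠ 0) :
    orderOf (blockRotation n M) = 2 * n := by
  have hdvd : n ∣ orderOf (blockRotation n M) := by
    have := orderOf_dvd_orderOf_of_semiconj (f := blockRotation n M)
      (g := Equiv.addRight (1 : ZMod n)) (Prod.fst_surjective (β := M)) fun _ => rfl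
    rwa [orderOf_addRight, ZMod.addOrderOf_one] at this
  have hpow : orderOf (blockRotation n M ^ n) = 2 := by
    refine orderOf_eq_prime (Equiv.ext fun ⟨i, y⟩ => ?_) fun h => hx ?_
    · simp [pow_two, blockRotation_pow_self_apply hn]
    · have := congrArg Prod.snd (Equiv.congr_fun h (0, x))
      rw [blockRotation_pow_self_apply hn] at this
      exact neg_eq_iff_add_eq_zero.mp this
  rw [orderOf_pow_of_dvd (by omega) hdvd] at hpow
  exact (Nat.div_eq_iff_eq_mul_left (by omega) hdvd).mp hpow

theorem two_dvd_orderOf_of_fst_apply (hn : 2 < n) {g : Perm (ZMod n × M)} {a : ZMod n}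
    (hg : ∀ p, (g p).1 = a - p.1) : 2 ∣ orderOf g := by
  have h2 : (1 : ZMod n) + 1 ≠ 0 := fun h => by
    have hdvd : n ∣ 2 := (ZMod.natCast_eq_zero_iff 2 n).mp (by rw [← h]; norm_num)
    exact hn.not_ge (Nat.le_of_dvd two_pos hdvd)
  rw [← orderOf_subLeft a h2]
  exact orderOf_dvd_orderOf_of_semiconj Prod.fst_surjective hg

theorem orderOf_blockReflection [NeZero n] (hn : Even n) (hn2 : 2 < n) :
    orderOf (blockReflection n M) = 2 :=
  Nat.dvd_antisymm (orderOf_dvd_of_pow_eq_one (by rw [pow_two, blockReflection_mul_self hn]))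
    (two_dvd_orderOf_of_fst_apply hn2 fun _ => rfl)

theorem orderOf_blockRotation_mul_blockGlide [NeZero n] (hn : Even n) (hn2 : 2 < n) (b : M) :
    orderOf (blockRotation n M * blockGlide n b) = 2 := by
  refine Nat.dvd_antisymm (orderOf_dvd_of_pow_eq_one ?_)
    (two_dvd_orderOf_of_fst_apply (a := 3) hn2 ?_)
  · ext ⟨i, x⟩
    · exact show (2 - (2 - i + 1) + 1 : ZMod n) = i by ring
    · simp [pow_two, blockRotation_apply, blockGlide_apply, blockSign_add_one hn,
        blockSign_two_sub hn, smul_smul]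
  · rintro ⟨i, _⟩
    exact show (2 - i + 1 : ZMod n) = 3 - i by ring

theorem eq_one_of_blockTranslation_apply_zero [NeZero n] (hn : Even n)
    (hM : Function.Injective fun x : M => 2 • x) {w : Multiplicative (M × M)}
    (hw : ∀ i, (blockTranslation n M w (i, 0)).2 = 0) : w = 1 := by
  obtain ⟨u, v, rfl⟩ : ∃ u v, w = .ofAdd (u, v) := ⟨_, _, rfl⟩
  have hadd : u + v = 0 := by simpa [blockTranslation_apply, blockSign_zero hn] using hw 0
  have hsub : u + -v = 0 := by simpa [blockTranslation_apply, blockSign_one] using hw 1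
  have hu : u = 0 := hM <| calc
    2 • u = (u + v) + (u + -v) := by abel
    _ = 2 • 0 := by rw [hadd, hsub, add_zero, smul_zero]
  rw [hu, zero_add] at hadd
  rw [hu, hadd]
  rfl

theorem blockTranslation_injective [NeZero n] (hn : Even n)
    (hM : Function.Injective fun x : M => 2 • x) : Function.Injective (blockTranslation n M) :=
  (injective_iff_map_eq_one _).mpr fun _ h =>
    eq_one_of_blockTranslation_apply_zero hn hM fun _ => by rw [h, Equiv.Perm.one_apply]

theorem orderOf_blockGlide [NeZero n] (hn : Even n) (hn2 : 2 < n)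
    (hM : Function.Injective fun x : M => 2 • x) (b : M) :
    orderOf (blockGlide n b) = 2 * addOrderOf b := by
  have hdvd : 2 ∣ orderOf (blockGlide n b) := two_dvd_orderOf_of_fst_apply hn2 fun _ => rfl
  have hsq : orderOf (blockGlide n b ^ 2) = addOrderOf b := by
    rw [blockGlide_sq hn, orderOf_injective _ (blockTranslation_injective hn hM),
      orderOf_ofAdd_eq_addOrderOf, Prod.addOrderOf_mk, Nat.lcm_self]
  rw [← hsq, orderOf_pow_of_dvd two_ne_zero hdvd, Nat.mul_div_cancel' hdvd]

theorem zpowers_sup_zpowers_le_normalizer_range_blockTranslation [NeZero n] (hn : Even n) :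
    Subgroup.zpowers (blockRotation n M) ⊔ Subgroup.zpowers (blockReflection n M) ≤
      Subgroup.normalizer ((blockTranslation n M).range : Set (Perm (ZMod n × M))) := by
  rw [sup_le_iff, Subgroup.zpowers_le, Subgroup.zpowers_le]
  let swap : M × M ≃ M × M := Equiv.prodComm M M
  let quarterTurn : M × M ≃ M × M := swap.trans (Equiv.prodCongr (Equiv.refl M) (Equiv.neg M))
  constructor
  · exact mem_normalizer_range (Multiplicative.toAdd.trans (quarterTurn.trans Multiplicative.ofAdd))
      fun _ => blockRotation_mul_blockTranslation hn _ _
  · exact mem_normalizer_range (Multiplicative.toAdd.trans (swap.trans Multiplicative.ofAdd))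
      fun _ => blockReflection_mul_blockTranslation hn _ _

open scoped Pointwise in
theorem disjoint_range_blockTranslation [NeZero n] (hn : Even n)
    (hM : Function.Injective fun x : M => 2 • x) :
    Disjoint (blockTranslation n M).range
      (Subgroup.zpowers (blockRotation n M) ⊔ Subgroup.zpowers (blockReflection n M)) := by
  have hle : Subgroup.zpowers (blockRotation n M) ⊔ Subgroup.zpowers (blockReflection n M) ≤
      MulAction.stabilizer _ {p : ZMod n × M | p.2 = 0} := by
    simp only [sup_le_iff, Subgroup.zpowers_le, MulAction.mem_stabilizer_set]
    exact ⟨fun p => smul_eq_zero_iff_eq (blockSign p.1),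
      fun p => smul_eq_zero_iff_eq (blockSign p.1)⟩
  rw [Subgroup.disjoint_def]
  rintro _ ⟨w, rfl⟩ hw
  rw [eq_one_of_blockTranslation_apply_zero hn hM (w := w), map_one]
  exact fun i => (MulAction.mem_stabilizer_set.mp (hle hw) (i, 0)).mpr rfl

theorem blockTranslation_mem [NeZero n] (hn : Even n) {b : M}
    (hb : AddSubgroup.zmultiples b = ⊤) (hM : Function.Surjective fun x : M => 2 • x)
    {H : Subgroup (Perm (ZMod n × M))} (hrot : blockRotation n M ∈ H)
    (htrans : blockTranslation n M (.ofAdd (b, b)) ∈ H) (w : Multiplicative (M × M)) :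
    blockTranslation n M w ∈ H := by
  have hconj : ∀ u v, blockTranslation n M (.ofAdd (u, v)) ∈ H →
      blockTranslation n M (.ofAdd (v, -u)) ∈ H := fun u v huv => by
    rw [eq_mul_inv_of_mul_eq (blockRotation_mul_blockTranslation hn u v).symm]
    exact H.mul_mem (H.mul_mem hrot huv) (H.inv_mem hrot)
  have hleft : ∀ u, blockTranslation n M (.ofAdd (u, 0)) ∈ H := fun u => by
    obtain ⟨y, rfl⟩ := hM u
    obtain ⟨k, rfl⟩ := AddSubgroup.mem_zmultiples_iff.mp (hb ▸ AddSubgroup.mem_top y)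
    have hdouble := H.zpow_mem (H.mul_mem htrans (hconj b b htrans)) k
    have hsum : (2 • k • b, 0) = k • ((b, b) + (b, -b)) := by simp [two_nsmul]
    rwa [← map_mul, ← map_zpow, ← ofAdd_add, ← ofAdd_zsmul, ← hsum] at hdouble
  obtain ⟨u, v, rfl⟩ : ∃ u v, w = .ofAdd (u, v) := ⟨_, _, rfl⟩
  have hsplit : blockTranslation n M (.ofAdd (u, v)) =
      blockTranslation n M (.ofAdd (u, 0)) * blockTranslation n M (.ofAdd (0, -(-v))) := by
    rw [← map_mul, ← ofAdd_add]
    simp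
  rw [hsplit]
  exact H.mul_mem (hleft u) (hconj _ _ (hleft (-v)))

theorem closure_blockRotation_blockGlide [NeZero n] (hn : Even n) {b : M}
    (hb : AddSubgroup.zmultiples b = ⊤) (hM : Function.Surjective fun x : M => 2 • x) :
    Subgroup.closure {blockRotation n M, blockGlide n b} =
      (blockTranslation n M).range ⊔
        (Subgroup.zpowers (blockRotation n M) ⊔ Subgroup.zpowers (blockReflection n M)) := by
  have hrot : blockRotation n M ∈ Subgroup.closure {blockRotation n M, blockGlide n b} :=
    Subgroup.subset_closure (Set.mem_insert _ _)
  have hglide : blockGlide n b ∈ Subgroup.closure {blockRotation n M, blockGlide n b} :=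
    Subgroup.subset_closure (Set.mem_insert_of_mem _ rfl)
  have htrans := blockTranslation_mem hn hb hM hrot
    (blockGlide_sq hn b ▸ Subgroup.pow_mem _ hglide 2)
  apply le_antisymm
  · rw [Subgroup.closure_le, Set.pair_subset_iff]
    exact ⟨Subgroup.mem_sup_right (Subgroup.mem_sup_left (Subgroup.mem_zpowers _)),
      Subgroup.mul_mem_sup ⟨_, rfl⟩ (Subgroup.mem_sup_right (Subgroup.mem_zpowers _))⟩
  · rw [sup_le_iff, sup_le_iff, Subgroup.zpowers_le, Subgroup.zpowers_le]
    refine ⟨?_, hrot, ?_⟩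
    · rintro _ ⟨w, rfl⟩
      exact htrans w
    · exact (Subgroup.mul_mem_cancel_left _ (htrans _)).mp hglide

theorem card_closure_blockRotation_blockGlide (hn : n % 4 = 2) (hn2 : 2 < n) [Nontrivial M]
    {b : M} (hb : AddSubgroup.zmultiples b = ⊤) (hM : Function.Bijective fun x : M => 2 • x) :
    Nat.card (Subgroup.closure {blockRotation n M, blockGlide n b}) =
      4 * Nat.card M ^ 2 * n := by
  have : NeZero n := ⟨by omega⟩
  have heven : Even n := Nat.even_iff.mpr (by omega)
  obtain ⟨x, hx⟩ := exists_ne (0 : M)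
  have hxx : x + x ≠ 0 := fun h => hx (hM.1 (by simpa [two_nsmul] using h))
  have hrot := orderOf_blockRotation hn hxx
  have hrange : Nat.card (blockTranslation n M).range = Nat.card M ^ 2 := by
    rw [← Nat.card_congr (MonoidHom.ofInjective (blockTranslation_injective heven hM.1)).toEquiv,
      Nat.card_congr Multiplicative.toAdd, Nat.card_prod, pow_two]
  have hdihedral : Nat.card (Subgroup.zpowers (blockRotation n M) ⊔
      Subgroup.zpowers (blockReflection n M) : Subgroup _) = 2 * (2 * n) := by
    rw [card_zpowers_sup_zpowers_of_inverts (orderOf_blockReflection heven hn2)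
      (blockReflection_conj_blockRotation heven), hrot]
    exact pow_ne_one_of_lt_orderOf two_ne_zero (by omega)
  rw [closure_blockRotation_blockGlide heven hb hM.2,
    card_sup_eq_mul_of_disjoint (zpowers_sup_zpowers_le_normalizer_range_blockTranslation heven)
      (disjoint_range_blockTranslation heven hM.1), hrange, hdihedral]
  ring

end Model

section SignedCoordinates

/-- The sign relating the original coordinate in block `i` to the signed one. Its `4`-periodic
pattern is forced by `coordSign (i + 1) = blockSign i * coordSign i`; as `n ≡ 2 (mod 4)` the pattern
breaks between the blocks `0` and `1`, where `σ₁` acts by `j ↦ 1 - j` instead of `j ↦ j`. -/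
def coordSign {n : ℕ} (i : ZMod n) : ℤˣ := (-1) ^ (zrep i / 2)

/-- The change to signed coordinates, `x = ± (j - 1/2)` in each block. Here `2⁻¹ : ZMod m` is the
inverse of `2` only for odd `m`. -/
def signedCoord (n m : ℕ) : Perm (ZMod n × ZMod m) :=
  Equiv.prodShear (Equiv.refl _) fun i =>
    (Equiv.subRight (2⁻¹ : ZMod m)).trans (MulAction.toPerm (coordSign i))

variable {n m : ℕ}

theorem signedCoord_apply (i : ZMod n) (j : ZMod m) :
    signedCoord n m (i, j) = (i, coordSign i • (j - 2⁻¹)) := rfl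

theorem coordSign_zero (hn : n % 4 = 2) : coordSign (0 : ZMod n) = -1 := by
  rw [coordSign, zrep_zero, Odd.neg_one_pow (Nat.odd_iff.mpr (by omega))]

theorem coordSign_one [NeZero n] : coordSign (1 : ZMod n) = 1 := by
  rw [coordSign, zrep_one]
  rfl

theorem coordSign_add_one [NeZero n] {i : ZMod n} (hi : i ≠ 0) :
    coordSign (i + 1) = blockSign i * coordSign i := by
  rw [coordSign, zrep_add_one hi, neg_one_pow_succ_div_two, coordSign, blockSign]

theorem coordSign_two_sub (hn : n % 4 = 2) {i : ZMod n} (hi : i ≠ 1) :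
    coordSign (2 - i) = blockSign i * coordSign i := by
  have : NeZero n := ⟨by omega⟩
  have hadd := zrep_two_sub_add_zrep hi
  rw [coordSign, coordSign, blockSign, ← neg_one_pow_succ_div_two, neg_one_pow_congr]
  simp only [Nat.even_iff]
  omega

theorem coordSign_two_sub_eq_ite (hn : n % 4 = 2) {i : ZMod n} (hi : i ≠ 1) :
    coordSign (2 - i) = if zrep i % 4 = 0 ∨ zrep i % 4 = 3 then 1 else -1 := by
  rw [coordSign_two_sub hn hi, blockSign, coordSign, ← neg_one_pow_succ_div_two]
  split_ifs with h
  · rw [Even.neg_one_pow (Nat.even_iff.mpr (by omega))]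
  · rw [Odd.neg_one_pow (Nat.odd_iff.mpr (by omega))]

theorem conj_signedCoord_eq_blockRotation (hm : Odd m) (hn : n % 4 = 2)
    {σ : Perm (ZMod n × ZMod m)}
    (hσ : ∀ i j, σ (i, j) = if i = 0 then (i + 1, 1 - j) else (i + 1, j)) :
    MulAut.conj (signedCoord n m) σ = blockRotation n (ZMod m) := by
  have : NeZero n := ⟨by omega⟩
  rw [MulAut.conj_apply, mul_inv_eq_iff_eq_mul]
  ext1 ⟨i, j⟩
  rw [Equiv.Perm.mul_apply, Equiv.Perm.mul_apply, hσ, signedCoord_apply i j, blockRotation_apply]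
  split_ifs with hi
  · rw [hi, zero_add, signedCoord_apply, coordSign_one, coordSign_zero hn,
      blockSign_zero (Nat.even_iff.mpr (by omega))]
    refine congrArg (Prod.mk _) ?_
    simp only [one_smul, Units.neg_smul]
    linear_combination -two_mul_inv_two hm
  · rw [signedCoord_apply, coordSign_add_one hi, mul_smul]

theorem conj_signedCoord_eq_blockGlide (hm : Odd m) (hn : n % 4 = 2)
    {σ : Perm (ZMod n × ZMod m)}
    (hσ : ∀ i j, σ (i, j) = if i = 1 then (2 - i, 2 - j)
      else if zrep i % 4 = 0 ∨ zrep i % 4 = 3 then (2 - i, j + 1) else (2 - i, j - 1)) :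
    MulAut.conj (signedCoord n m) σ = blockGlide n (1 : ZMod m) := by
  have : NeZero n := ⟨by omega⟩
  rw [MulAut.conj_apply, mul_inv_eq_iff_eq_mul]
  ext1 ⟨i, j⟩
  rw [Equiv.Perm.mul_apply, Equiv.Perm.mul_apply, signedCoord_apply i j, blockGlide_apply]
  obtain rfl | hi := eq_or_ne i 1
  · have hfix : (2 : ZMod n) - 1 = 1 := by norm_num
    rw [hσ, if_pos rfl, hfix, signedCoord_apply, coordSign_one, blockSign_one]
    refine congrArg (Prod.mk _) ?_
    simp only [one_smul, Units.neg_smul]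
    linear_combination -two_mul_inv_two hm
  · have hshift : σ (i, j) = (2 - i, j + coordSign (2 - i) • 1) := by
      rw [hσ, if_neg hi, coordSign_two_sub_eq_ite hn hi]
      split_ifs <;> simp [sub_eq_add_neg]
    have hsq : coordSign (2 - i) • coordSign (2 - i) • (1 : ZMod m) = 1 := by
      rw [smul_smul, Int.units_mul_self, one_smul]
    rw [hshift, signedCoord_apply, add_sub_right_comm, smul_add, hsq,
      coordSign_two_sub hn hi, mul_smul, add_comm]

end SignedCoordinates

theorem statement14_general
    (m n : ℕ) (hm : 3 ≤ m) (hmo : Odd m) (hn : 3 ≤ n) (hn4 : n % 4 = 2)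
    (σ₁ σ₂ : Equiv.Perm (ZMod n × ZMod m))
    (hσ₁ : ∀ (i : ZMod n) (j : ZMod m),
      σ₁ (i, j) = if i = 0 then (i + 1, 1 - j) else (i + 1, j))
    (hσ₂ : ∀ (i : ZMod n) (j : ZMod m),
      σ₂ (i, j) = if i = 1 then (2 - i, 2 - j)
        else if zrep i % 4 = 0 ∨ zrep i % 4 = 3 then (2 - i, j + 1) else (2 - i, j - 1)) :
    orderOf σ₁ = 2 * n ∧ orderOf σ₂ = 2 * m ∧ orderOf (σ₁ * σ₂) = 2 ∧
      Nat.card (Subgroup.closure {σ₁, σ₂} : Subgroup (Equiv.Perm (ZMod n × ZMod m))) =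
        4 * m ^ 2 * n := by
  have : NeZero n := ⟨by omega⟩
  have : Fact (1 < m) := ⟨by omega⟩
  have hn2 : Even n := Nat.even_iff.mpr (by omega)
  have htwo : Function.Bijective fun x : ZMod m => 2 • x :=
    Nat.Coprime.nsmul_right_bijective (by rwa [Nat.card_zmod, Nat.coprime_two_right])
  have hone : (1 : ZMod m) + 1 ≠ 0 := fun h =>
    one_ne_zero (htwo.1 (by simpa only [two_nsmul, add_zero] using h))
  let e := MulAut.conj (signedCoord n m)
  rw [← e.orderOf_eq σ₁, ← e.orderOf_eq σ₂, ← e.orderOf_eq (σ₁ * σ₂), ← card_closure_pair_map e,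
    map_mul, conj_signedCoord_eq_blockRotation hmo hn4 hσ₁,
    conj_signedCoord_eq_blockGlide hmo hn4 hσ₂]
  refine ⟨orderOf_blockRotation hn4 hone, ?_, orderOf_blockRotation_mul_blockGlide hn2 hn 1, ?_⟩
  · rw [orderOf_blockGlide hn2 hn htwo.1, ZMod.addOrderOf_one]
  · rw [card_closure_blockRotation_blockGlide hn4 hn (zmultiples_one_eq_top m) htwo, Nat.card_zmod]

theorem statement14
    (m s n : ℕ) (hm : 3 ≤ m) (hmo : Odd m) (hs : 0 < s) (hs4 : s % 4 = 2) (hn : n = s * m)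
    (σ₁ σ₂ : Equiv.Perm (ZMod n × ZMod m))
    (hσ₁ : ∀ (i : ZMod n) (j : ZMod m),
      σ₁ (i, j) = if i = 0 then (i + 1, 1 - j) else (i + 1, j))
    (hσ₂ : ∀ (i : ZMod n) (j : ZMod m),
      σ₂ (i, j) = if i = 1 then (2 - i, 2 - j)
        else if zrep i % 4 = 0 ∨ zrep i % 4 = 3 then (2 - i, j + 1) else (2 - i, j - 1))
    :
    orderOf σ₁ = 2 * n ∧ orderOf σ₂ = 2 * m ∧ orderOf (σ₁ * σ₂) = 2 ∧
      Nat.card (Subgroup.closure {σ₁, σ₂} : Subgroup (Equiv.Perm (ZMod n × ZMod m))) = 4 * m ^ 2 * n := by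
  have hn4 : n % 4 = 2 := by
    rw [hn, Nat.mul_mod, hs4]
    have := Nat.odd_iff.mp hmo
    rcases (by omega : m % 4 = 1 ∨ m % 4 = 3) with h | h <;> rw [h]
  have hn3 : 3 ≤ n := hn ▸ hm.trans (Nat.le_mul_of_pos_left m hs)
  exact statement14_general m n hm hmo hn3 hn4 σ₁ σ₂ hσ₁ hσ₂
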